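/- For a positive integer b, the symmetrical antitree AT(1,b,b,1) (which has diameter 3) is Bonnet-Myers sharp if and only if b=3; that is, AT(1,3,3,1) is the only symmetrical antitree with a_1=1 of diameter 3 that is Bonnet-Myers sharp. -/

import Mathlib

open scoped Classical
open Finset

noncomputable section

/-- The degree of a vertex `x` in the graph `G`. -/
def deg {V : Type*} [Fintype V] (G : SimpleGraph V) (x : V) : ℕ :=
  (Finset.univ.filter (fun y => G.Adj x y)).card

/-- The diameter of `G`: the maximum of the combinatorial distance over all pairs of vertices. -/
def diam {V : Type*} [Fintype V] (G : SimpleGraph V) : ℕ :=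
  Finset.univ.sup (fun xy : V × V => G.dist xy.1 xy.2)

/-- The probability measure `μ_x^p` of the lazy simple random walk at `x` with idleness `p`. -/
def mu {V : Type*} [Fintype V] (G : SimpleGraph V) (p : ℝ) (x : V) : V → ℝ :=
  fun z => if z = x then p else if G.Adj x z then (1 - p) / (deg G x : ℝ) else 0

/-- The Wasserstein distance `W₁(μ₁, μ₂)` with respect to the combinatorial distance of `G`:
the infimum of the total transport cost over all transport plans from `μ₁` to `μ₂`. -/
def W1 {V : Type*} [Fintype V] (G : SimpleGraph V) (μ₁ μ₂ : V → ℝ) : ℝ :=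
  sInf {c : ℝ | ∃ π : V → V → ℝ,
    (∀ x y, 0 ≤ π x y ∧ π x y ≤ 1) ∧
    (∀ x, ∑ y, π x y = μ₁ x) ∧
    (∀ y, ∑ x, π x y = μ₂ y) ∧
    c = ∑ x, ∑ y, (G.dist x y : ℝ) * π x y}

/-- The `p`-Ollivier-Ricci curvature `κ_p(x,y) = 1 - W₁(μ_x^p, μ_y^p)`. -/
def kappa {V : Type*} [Fintype V] (G : SimpleGraph V) (p : ℝ) (x y : V) : ℝ :=
  1 - W1 G (mu G p x) (mu G p y)

/-- The Lin-Lu-Yau curvature `κ_LLY(x,y) = lim_{p→1} κ_p(x,y)/(1-p)`. -/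
def kappaLLY {V : Type*} [Fintype V] (G : SimpleGraph V) (x y : V) : ℝ :=
  Filter.limUnder (nhdsWithin 1 (Set.Iio 1)) (fun p => kappa G p x y / (1 - p))

/-- `G` is Bonnet-Myers sharp if the infimum of `κ_LLY` over the edges equals `2/diam(G)`. -/
def BMSharp {V : Type*} [Fintype V] (G : SimpleGraph V) : Prop :=
  sInf {r : ℝ | ∃ x y, G.Adj x y ∧ r = kappaLLY G x y} = 2 / (diam G : ℝ)

/-- `G` is obtained from the complete graph on its vertex set by deleting a matching
(a set of pairwise disjoint edges, encoded as a symmetric irreflexive relation in which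
every vertex has at most one partner). -/
def IsMatchingDeletionOfComplete {V : Type*} (G : SimpleGraph V) : Prop :=
  ∃ M : V → V → Prop, Symmetric M ∧ (∀ x, ¬ M x x) ∧
    (∀ x y z, M x y → M x z → y = z) ∧
    (∀ x y, G.Adj x y ↔ x ≠ y ∧ ¬ M x y)

/-- The graph `G(a,b)` on `2a+b` vertices `u_1, …, u_{2a}, v_1, …, v_b` (encoded as
`Fin (2a+b)`, with `u_i` the index `i-1` and `v_j` the index `2a+j-1`), in which two distinct
vertices are adjacent unless they form a pair `{u_{2i-1}, u_{2i}}`, i.e. `G(a,b)` is the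
complete graph `K_{2a+b}` with a matching of size `a` deleted. -/
def Gab (a b : ℕ) : SimpleGraph (Fin (2*a+b)) where
  Adj x y := x ≠ y ∧ ¬((x : ℕ) < 2*a ∧ (y : ℕ) < 2*a ∧ (x : ℕ)/2 = (y : ℕ)/2)
  symm := by
    constructor
    intro x y h
    exact ⟨h.1.symm, fun hc => h.2 ⟨hc.2.1, hc.1, hc.2.2.symm⟩⟩
  loopless := by constructor; intro x h; exact h.1 rfl

/-- The antitree `AT(a_1, …, a_N)` on the disjoint union of sets `V_1, …, V_N` with
`|V_k| = a_k` (0-indexed here: `V_k` is `Fin (a k)` for `k : Fin N`): two distinct vertices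
are adjacent iff they lie in the same set or in consecutive sets. -/
def antitree (N : ℕ) (a : Fin N → ℕ) : SimpleGraph (Σ k : Fin N, Fin (a k)) where
  Adj x y := x ≠ y ∧
    ((x.1 : ℕ) = (y.1 : ℕ) ∨ (x.1 : ℕ) + 1 = (y.1 : ℕ) ∨ (y.1 : ℕ) + 1 = (x.1 : ℕ))
  symm := by
    constructor
    intro x y h
    refine ⟨h.1.symm, ?_⟩
    rcases h.2 with h2 | h2 | h2
    · exact Or.inl h2.symm
    · exact Or.inr (Or.inr h2)
    · exact Or.inr (Or.inl h2)
  loopless := by constructor; intro x h; exact h.1 rfl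

theorem lip_dist {V : Type*} (G : SimpleGraph V) (hc : G.Connected) (f : V → ℝ)
    (h : ∀ u v, G.Adj u v → f v - f u ≤ 1) (u v : V) : f v - f u ≤ (G.dist u v : ℝ) := by
  obtain ⟨w, hw⟩ := hc.exists_walk_length_eq_dist u v
  rw [← hw]
  clear hw
  induction w with
  | nil => simp
  | cons hadj w ih =>
    have := h _ _ hadj
    rw [SimpleGraph.Walk.length_cons]
    push_cast
    linarith

theorem W1_eq {V ι : Type*} [Fintype V] [Fintype ι] (G : SimpleGraph V) (μ₁ μ₂ : V → ℝ)
    (src tgt : ι → V) (m : ι → ℝ) (f : V → ℝ)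
    (hf : ∀ u v, f v - f u ≤ (G.dist u v : ℝ))
    (hm : ∀ k, 0 ≤ m k)
    (hd : ∀ k, (G.dist (src k) (tgt k) : ℝ) ≤ f (tgt k) - f (src k))
    (hbal : ∀ z, μ₂ z + ∑ k, (if src k = z then m k else 0)
      = μ₁ z + ∑ k, (if tgt k = z then m k else 0))
    (hout : ∀ z, ∑ k, (if src k = z then m k else 0) ≤ μ₁ z)
    (h1 : ∀ z, μ₁ z ≤ 1) :
    W1 G μ₁ μ₂ = ∑ k, m k * (f (tgt k) - f (src k)) := by
  have hdual : ∑ v, f v * μ₂ v - ∑ v, f v * μ₁ v = ∑ k, m k * (f (tgt k) - f (src k)) := by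
    have e : ∀ g : ι → V, ∑ v, f v * ∑ k, (if g k = v then m k else 0) = ∑ k, m k * f (g k) := by
      intro g
      simp_rw [Finset.mul_sum]
      rw [Finset.sum_comm]
      apply Finset.sum_congr rfl
      intro k _
      simp [mul_comm]
    simp_rw [mul_sub]
    rw [Finset.sum_sub_distrib, ← e src, ← e tgt, ← Finset.sum_sub_distrib,
      ← Finset.sum_sub_distrib]
    apply Finset.sum_congr rfl
    intro v _
    have := hbal v
    rw [← mul_sub, ← mul_sub]
    congr 1
    linarith
  rw [← hdual]
  apply IsLeast.csInf_eq
  constructor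
  · refine ⟨fun u v => (∑ k, if src k = u ∧ tgt k = v then m k else 0) +
      (if u = v then μ₁ u - ∑ k, (if src k = u then m k else 0) else 0), ?_, ?_, ?_, ?_⟩
    · have hnn : ∀ u v, 0 ≤ (∑ k, if src k = u ∧ tgt k = v then m k else 0) +
        (if u = v then μ₁ u - ∑ k, (if src k = u then m k else 0) else 0) := by
        intro u v
        apply add_nonneg
        · apply Finset.sum_nonneg
          intro k _
          split_ifs
          · exact hm k
          · exact le_rfl
        · split_ifs
          · linarith [hout u]
          · exact le_rfl
      intro u v
      refine ⟨hnn u v, ?_⟩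
      have hle : (∑ k, if src k = u ∧ tgt k = v then m k else 0) ≤
          ∑ k, (if src k = u then m k else 0) := by
        apply Finset.sum_le_sum
        intro k _
        have := hm k
        split_ifs <;> first | exact le_rfl | exact this | (exfalso; tauto)
      have := h1 u
      have := hout u
      show (∑ k, if src k = u ∧ tgt k = v then m k else 0) +
        (if u = v then μ₁ u - ∑ k, (if src k = u then m k else 0) else 0) ≤ 1
      by_cases huv : u = v
      · rw [if_pos huv]; linarith
      · rw [if_neg huv]; linarith
    · intro u
      rw [Finset.sum_add_distrib, Finset.sum_comm]
      have : ∀ k, (∑ v, if src k = u ∧ tgt k = v then m k else 0) = if src k = u then m k else 0 := by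
        intro k
        by_cases h : src k = u <;> simp [h]
      simp [this]
    · intro v
      rw [Finset.sum_add_distrib, Finset.sum_comm]
      have : ∀ k, (∑ u, if src k = u ∧ tgt k = v then m k else 0) = if tgt k = v then m k else 0 := by
        intro k
        by_cases h : tgt k = v <;> simp [h]
      simp only [this, Finset.sum_ite_eq', Finset.mem_univ, if_true]
      linarith [hbal v]
    · rw [hdual]
      have : ∀ u v, (G.dist u v : ℝ) * ((∑ k, if src k = u ∧ tgt k = v then m k else 0) +
          (if u = v then μ₁ u - ∑ k, (if src k = u then m k else 0) else 0)) =
          ∑ k, if src k = u then (if tgt k = v then (G.dist u v : ℝ) * m k else 0) else 0 := by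
        intro u v
        rw [mul_add, Finset.mul_sum]
        have h0 : (G.dist u v : ℝ) * (if u = v then μ₁ u - ∑ k, (if src k = u then m k else 0) else 0) = 0 := by
          split_ifs with h
          · subst h; simp
          · simp
        rw [h0, add_zero]
        apply Finset.sum_congr rfl
        intro k _
        by_cases h : src k = u <;> by_cases h' : tgt k = v <;> simp [h, h']
      simp_rw [this]
      have e2 : ∀ u, ∑ v, ∑ k, (if src k = u then (if tgt k = v then (G.dist u v : ℝ) * m k else 0) else 0)
         = ∑ k, if src k = u then (G.dist u (tgt k) : ℝ) * m k else 0 := by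
        intro u
        rw [Finset.sum_comm]
        apply Finset.sum_congr rfl
        intro k _
        by_cases h : src k = u <;> simp [h]
      simp_rw [e2]
      rw [Finset.sum_comm]
      apply Finset.sum_congr rfl
      intro k _
      simp only [Finset.sum_ite_eq, Finset.mem_univ, if_true]
      have : (G.dist (src k) (tgt k) : ℝ) = f (tgt k) - f (src k) := le_antisymm (hd k) (hf _ _)
      rw [this, mul_comm]
  · rintro c ⟨π, hπ, hr, hcol, rfl⟩
    have a1 : ∑ v, f v * μ₂ v = ∑ u, ∑ v, f v * π u v := by
      rw [Finset.sum_comm]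
      apply Finset.sum_congr rfl
      intro v _
      rw [← hcol v, Finset.mul_sum]
    have a2 : ∑ v, f v * μ₁ v = ∑ u, ∑ v, f u * π u v := by
      apply Finset.sum_congr rfl
      intro v _
      rw [← hr v, Finset.mul_sum]
    rw [a1, a2, ← Finset.sum_sub_distrib]
    apply Finset.sum_le_sum
    intro u _
    rw [← Finset.sum_sub_distrib]
    apply Finset.sum_le_sum
    intro v _
    rw [← sub_mul]
    exact mul_le_mul_of_nonneg_right (hf u v) (hπ u v).1

theorem W1_symm {V : Type*} [Fintype V] (G : SimpleGraph V) (μ₁ μ₂ : V → ℝ) :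
    W1 G μ₁ μ₂ = W1 G μ₂ μ₁ := by
  unfold W1
  congr 1
  ext c
  constructor <;>
  · rintro ⟨π, h1, h2, h3, h4⟩
    refine ⟨fun x y => π y x, fun x y => h1 y x, h3, h2, ?_⟩
    rw [h4, Finset.sum_comm]
    simp_rw [G.dist_comm]

theorem kappaLLY_symm {V : Type*} [Fintype V] (G : SimpleGraph V) (x y : V) :
    kappaLLY G x y = kappaLLY G y x := by
  unfold kappaLLY kappa
  simp_rw [W1_symm G (mu G _ x)]

theorem kappaLLY_eq {V : Type*} [Fintype V] (G : SimpleGraph V) (x y : V) (r : ℝ)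
    (h : ∀ p : ℝ, 1/2 < p → p < 1 → W1 G (mu G p x) (mu G p y) = 1 - (1 - p) * r) :
    kappaLLY G x y = r := by
  apply Filter.Tendsto.limUnder_eq
  apply Filter.Tendsto.congr' (f₁ := fun _ => r) _ tendsto_const_nhds
  have h1 : ∀ᶠ p : ℝ in nhdsWithin 1 (Set.Iio 1), 1/2 < p :=
    nhdsWithin_le_nhds (lt_mem_nhds (by norm_num))
  filter_upwards [h1, self_mem_nhdsWithin] with p hp1 hp2
  have hp2 : p < 1 := hp2
  unfold kappa
  rw [h p hp1 hp2]
  have : 1 - p ≠ 0 := by linarith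
  field_simp
  ring

structure AT4 {V : Type*} [Fintype V] (G : SimpleGraph V) (b : ℕ) (s t : V) (A B : Fin b → V) :
    Prop where
  cases : ∀ x, x = s ∨ (∃ i, x = A i) ∨ (∃ i, x = B i) ∨ x = t
  card : ∀ P : V → Prop, (Finset.univ.filter P).card = (if P s then 1 else 0) +
    (Finset.univ.filter (fun i => P (A i))).card + (Finset.univ.filter (fun i => P (B i))).card
    + (if P t then 1 else 0)
  st : s ≠ t
  sA : ∀ i, s ≠ A i
  sB : ∀ i, s ≠ B i
  tA : ∀ i, t ≠ A i
  tB : ∀ i, t ≠ B i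
  AB : ∀ i j, A i ≠ B j
  AA : ∀ i j, A i = A j ↔ i = j
  BB : ∀ i j, B i = B j ↔ i = j
  asA : ∀ i, G.Adj s (A i)
  atB : ∀ i, G.Adj t (B i)
  asB : ∀ i, ¬ G.Adj s (B i)
  atA : ∀ i, ¬ G.Adj t (A i)
  ast : ¬ G.Adj s t
  aAB : ∀ i j, G.Adj (A i) (B j)
  aAA : ∀ i j, G.Adj (A i) (A j) ↔ i ≠ j
  aBB : ∀ i j, G.Adj (B i) (B j) ↔ i ≠ j

namespace AT4

variable {V : Type*} [Fintype V] {G : SimpleGraph V} {b : ℕ} {s t : V} {A B : Fin b → V}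

theorem rev (h : AT4 G b s t A B) : AT4 G b t s B A where
  cases x := by rcases h.cases x with h | h | h | h <;> simp [h]
  card P := by rw [h.card P]; ring
  st := h.st.symm
  sA := h.tB
  sB := h.tA
  tA := h.sB
  tB := h.sA
  AB i j := (h.AB j i).symm
  AA := h.BB
  BB := h.AA
  asA := h.atB
  atB := h.asA
  asB := h.atA
  atA := h.asB
  ast h' := h.ast h'.symm
  aAB i j := (h.aAB j i).symm
  aAA := h.aBB
  aBB := h.aAA

theorem deg_s (h : AT4 G b s t A B) : deg G s = b := by
  unfold deg
  rw [h.card]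
  simp [h.asA, h.asB, h.ast]

theorem deg_A (h : AT4 G b s t A B) (i : Fin b) : deg G (A i) = 2 * b := by
  unfold deg
  rw [h.card]
  have h1 : Finset.univ.filter (fun j => G.Adj (A i) (A j)) = Finset.univ.erase i := by
    ext j; simp [h.aAA, eq_comm]
  have hb := i.pos
  rw [h1, Finset.card_erase_of_mem (by simp)]
  have h2 : ¬ G.Adj (A i) t := fun h' => h.atA i h'.symm
  simp [(h.asA i).symm, h.aAB, h2]
  omega

theorem deg_B (h : AT4 G b s t A B) (i : Fin b) : deg G (B i) = 2 * b := h.rev.deg_A i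

theorem conn (h : AT4 G b s t A B) (hb : 0 < b) : G.Connected := by
  have key : ∀ x, G.Reachable x (A ⟨0, hb⟩) := by
    have hB : ∀ i, G.Reachable (B i) (A ⟨0, hb⟩) := fun i => (h.aAB _ i).symm.reachable
    intro x
    rcases h.cases x with rfl | ⟨i, rfl⟩ | ⟨i, rfl⟩ | rfl
    · exact (h.asA _).reachable
    · exact (h.aAB i ⟨0, hb⟩).reachable.trans (hB _)
    · exact hB i
    · exact (h.atB ⟨0, hb⟩).reachable.trans (hB _)
  have : Nonempty V := ⟨s⟩
  exact ⟨fun x y => (key x).trans (key y).symm⟩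

def lev (s t : V) (A : Fin b → V) (x : V) : ℝ :=
  if x = s then 0 else if x = t then 3 else if ∃ i, x = A i then 1 else 2

theorem lev_s (_h : AT4 G b s t A B) : lev s t A s = 0 := by simp [lev]
theorem lev_t (h : AT4 G b s t A B) : lev s t A t = 3 := by simp [lev, h.st.symm]
theorem lev_A (h : AT4 G b s t A B) (i : Fin b) : lev s t A (A i) = 1 := by
  simp [lev, (h.sA i).symm, (h.tA i).symm, h.AA]
theorem lev_B (h : AT4 G b s t A B) (i : Fin b) : lev s t A (B i) = 2 := by
  simp [lev, (h.sB i).symm, (h.tB i).symm, fun j => (h.AB j i).symm]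

theorem lev_lip (h : AT4 G b s t A B) (hb : 0 < b) (u v : V) :
    lev s t A v - lev s t A u ≤ (G.dist u v : ℝ) := by
  apply lip_dist G (h.conn hb)
  intro u v huv
  rcases h.cases u with rfl | ⟨i, rfl⟩ | ⟨i, rfl⟩ | rfl <;>
  rcases h.cases v with rfl | ⟨j, rfl⟩ | ⟨j, rfl⟩ | rfl <;>
  first
  | (exfalso; first
      | exact h.asB _ huv
      | exact h.atA _ huv
      | exact h.ast huv
      | exact h.asB _ huv.symm
      | exact h.atA _ huv.symm
      | exact h.ast huv.symm)
  | (simp only [h.lev_s, h.lev_t, h.lev_A, h.lev_B]; norm_num)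

theorem dist_one {u v : V} (h : G.Adj u v) : G.dist u v = 1 :=
  SimpleGraph.dist_eq_one_iff_adj.2 h

theorem dist_sB (h : AT4 G b s t A B) (hb : 0 < b) (i : Fin b) : G.dist s (B i) ≤ 2 := by
  have := (h.conn hb).dist_triangle (u := s) (v := A i) (w := B i)
  rw [dist_one (h.asA i), dist_one (h.aAB i i)] at this
  exact this

theorem dist_st (h : AT4 G b s t A B) (hb : 0 < b) : G.dist s t ≤ 3 := by
  have := (h.conn hb).dist_triangle (u := s) (v := B ⟨0, hb⟩) (w := t)
  rw [dist_one (h.atB _).symm] at this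
  have := h.dist_sB hb ⟨0, hb⟩
  omega

theorem diam_eq (h : AT4 G b s t A B) (hb : 0 < b) : diam G = 3 := by
  apply le_antisymm
  · apply Finset.sup_le
    rintro ⟨u, v⟩ -
    simp only
    have hA : ∀ i j, G.dist (A i) (A j) ≤ 1 := by
      intro i j
      by_cases hij : i = j
      · simp [hij]
      · exact (dist_one ((h.aAA i j).2 hij)).le
    have hB : ∀ i j, G.dist (B i) (B j) ≤ 1 := by
      intro i j
      by_cases hij : i = j
      · simp [hij]
      · exact (dist_one ((h.aBB i j).2 hij)).le
    have e1 := h.dist_st hb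
    have e2 := h.dist_sB hb
    have e3 := h.rev.dist_sB hb
    have e4 := fun i => dist_one (h.asA i)
    have e5 := fun i => dist_one (h.atB i)
    have e6 := fun i j => dist_one (h.aAB i j)
    rcases h.cases u with rfl | ⟨i, rfl⟩ | ⟨i, rfl⟩ | rfl <;>
    rcases h.cases v with rfl | ⟨j, rfl⟩ | ⟨j, rfl⟩ | rfl
    · simp
    · simp [e4]
    · linarith [e2 j]
    · exact e1
    · rw [G.dist_comm]; simp [e4]
    · linarith [hA i j]
    · simp [e6]
    · rw [G.dist_comm]; linarith [e3 i]
    · rw [G.dist_comm]; linarith [e2 i]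
    · rw [G.dist_comm]; simp [e6]
    · linarith [hB i j]
    · rw [G.dist_comm]; simp [e5]
    · rw [G.dist_comm]; exact e1
    · linarith [e3 j]
    · simp [e5]
    · simp
  · have h1 := h.lev_lip hb s t
    rw [h.lev_s, h.lev_t] at h1
    have h2 : 3 ≤ G.dist s t := by
      have : (3 : ℝ) ≤ (G.dist s t : ℝ) := by linarith
      exact_mod_cast this
    exact h2.trans (Finset.le_sup (f := fun xy : V × V => G.dist xy.1 xy.2) (Finset.mem_univ (s, t)))

theorem mu_le_one (p : ℝ) (hp : 1/2 < p) (hp1 : p < 1) (x z : V) : mu G p x z ≤ 1 := by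
  unfold mu
  split_ifs
  · exact hp1.le
  · rcases Nat.eq_zero_or_pos (deg G x) with h | h
    · simp [h]
    · have : (1 : ℝ) ≤ deg G x := by exact_mod_cast h
      rw [div_le_one (by linarith)]
      linarith
  · norm_num

theorem kappa_sA (h : AT4 G b s t A B) (hb : 0 < b) (j : Fin b) :
    kappaLLY G s (A j) = (b + 1) / (2 * b) := by
  apply kappaLLY_eq
  intro p hp hp1
  have hb1 : (1 : ℝ) ≤ b := by exact_mod_cast hb
  have hc0 : 0 < (1 - p) / (2 * b) := by apply div_pos <;> linarith
  have hcq : (1 - p) / (2 * b) ≤ (1 - p) / 2 := by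
    apply div_le_div_of_nonneg_left <;> linarith
  have hc2 : (1 - p) / b = 2 * ((1 - p) / (2 * b)) := by field_simp
  have hc3 : (1 - p) / (2 * b) * (2 * b) = 1 - p := by field_simp
  have hfin : (1 - p) * ((b + 1) / (2 * b)) = (1 - p) / (2 * b) * (b + 1) := by ring
  rw [hfin]
  have hmu1 : ∀ z, mu G p s z = if z = s then p else if G.Adj s z then
      2 * ((1 - p) / (2 * b)) else 0 := by
    intro z; simp only [mu, h.deg_s, hc2]
  have hmu2 : ∀ z, mu G p (A j) z = if z = A j then p else if G.Adj (A j) z then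
      ((1 - p) / (2 * b)) else 0 := by
    intro z; simp only [mu, h.deg_A]; push_cast; rfl
  generalize (1 - p) / (2 * b) = c at *
  have hA : ∀ z x, ((if x = j then s else A x) = z) ↔ (if x = j then s = z else A x = z) := by
    intro z x
    split_ifs <;> rfl
  rw [W1_eq G _ _ (ι := Option (Fin b)) (fun k => k.elim s (fun i => if i = j then s else A i))
    (fun k => k.elim (A j) B) (fun k => k.elim (p - 2 * c) (fun _ => c)) (lev s t A)
    (h.lev_lip hb)]
  · rw [Fintype.sum_option]
    simp only [Option.elim, h.lev_s, h.lev_A, h.lev_B]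
    have : ∀ i, c * (2 - lev s t A (if i = j then s else A i)) = c + if i = j then c else 0 := by
      intro i
      split_ifs
      · rw [h.lev_s]; ring
      · rw [h.lev_A]; ring
    simp only [this, Finset.sum_add_distrib]
    simp
    linarith
  · rintro (_ | k)
    · simp only [Option.elim]; linarith
    · simp only [Option.elim]; linarith
  · rintro (_ | k)
    · simp only [Option.elim, h.lev_s, h.lev_A, dist_one (h.asA j)]; norm_num
    · simp only [Option.elim]
      split_ifs
      · rw [h.lev_s, h.lev_B]
        have := h.dist_sB hb k
        have : (G.dist s (B k) : ℝ) ≤ 2 := by exact_mod_cast this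
        linarith
      · rw [h.lev_A, h.lev_B, dist_one (h.aAB k k)]; norm_num
  · intro z
    rw [hmu1, hmu2, Fintype.sum_option, Fintype.sum_option]
    simp only [Option.elim]
    rcases h.cases z with rfl | ⟨i, rfl⟩ | ⟨i, rfl⟩ | rfl
    · simp [h.sA, hA z, (h.sA _).symm, (h.sB _).symm, (h.asA j).symm]
      ring
    · by_cases hij : i = j
      · subst hij
        simp [h.sA, hA (A i), (h.sA _).symm, (h.AB _ _).symm, h.AA, h.asA]
      · have hji : ¬ j = i := fun e => hij e.symm
        have e : ∀ x, ((if x = j then s else A x) = A i) ↔ x = i := by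
          intro x
          by_cases hx : x = j
          · simp [hx, h.sA, hji]
          · simp [hx, h.AA]
        simp [h.sA, e, (h.sA _).symm, (h.AB _ _).symm, h.AA, h.asA, h.aAA, hij, hji]
        ring
    · have e : ∀ x, ¬ ((if x = j then s else A x) = B i) := by
        intro x
        by_cases hx : x = j
        · simp [hx, h.sB]
        · simp [hx, h.AB]
      simp [e, h.sB, (h.sB _).symm, (h.AB _ _).symm, h.AB, h.BB, h.aAB, h.asB]
    · have e : ∀ x, ¬ ((if x = j then s else A x) = z) := by
        intro x
        by_cases hx : x = j
        · simp [hx, h.st]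
        · simp [hx, (h.tA _).symm]
      have e2 : ¬ G.Adj (A j) z := fun h' => h.atA j h'.symm
      simp [e, e2, h.st, h.st.symm, h.tA, (h.tA _).symm, (h.tB _).symm, h.ast]
  · intro z
    rw [hmu1, Fintype.sum_option]
    simp only [Option.elim]
    rcases h.cases z with rfl | ⟨i, rfl⟩ | ⟨i, rfl⟩ | rfl
    · simp [hA z, (h.sA _).symm]
      linarith
    · by_cases hij : i = j
      · subst hij
        simp [h.sA, hA (A i), (h.sA _).symm, h.AA, h.asA]
        linarith
      · have hji : ¬ j = i := fun e => hij e.symm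
        have e : ∀ x, ((if x = j then s else A x) = A i) ↔ x = i := by
          intro x
          by_cases hx : x = j
          · simp [hx, h.sA, hji]
          · simp [hx, h.AA]
        simp [h.sA, e, (h.sA _).symm, h.asA]
        linarith
    · have e : ∀ x, ¬ ((if x = j then s else A x) = B i) := by
        intro x
        by_cases hx : x = j
        · simp [hx, h.sB]
        · simp [hx, h.AB]
      simp [e, h.sB, (h.sB _).symm, h.asB]
    · have e : ∀ x, ¬ ((if x = j then s else A x) = z) := by
        intro x
        by_cases hx : x = j
        · simp [hx, h.st]
        · simp [hx, (h.tA _).symm]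
      simp [e, h.st, h.st.symm, h.ast]
  · exact mu_le_one p hp hp1 s

theorem mu_A (h : AT4 G b s t A B) (p : ℝ) (j : Fin b) (z : V) :
    mu G p (A j) z = if z = A j then p else if G.Adj (A j) z then
      ((1 - p) / (2 * b)) else 0 := by
  simp only [mu, h.deg_A]; push_cast; rfl

theorem kappa_AB (h : AT4 G b s t A B) (hb : 0 < b) (i j : Fin b) :
    kappaLLY G (A i) (B j) = (b - 1) / b := by
  apply kappaLLY_eq
  intro p hp hp1
  have hb1 : (1 : ℝ) ≤ b := by exact_mod_cast hb
  have hc0 : 0 < (1 - p) / (2 * b) := by apply div_pos <;> linarith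
  have hcq : (1 - p) / (2 * b) ≤ (1 - p) / 2 := by
    apply div_le_div_of_nonneg_left <;> linarith
  have hfin : (1 - p) * ((b - 1) / b) = (1 - p) - 2 * ((1 - p) / (2 * b)) := by
    field_simp
  rw [hfin]
  have hmu1 := h.mu_A p i
  have hmu2 := h.rev.mu_A p j
  generalize (1 - p) / (2 * b) = c at *
  rw [W1_eq G _ _ (ι := Bool) (fun k => cond k (A i) s)
    (fun k => cond k (B j) t) (fun k => cond k (p - c) c) (lev s t A)
    (h.lev_lip hb)]
  · simp [h.lev_s, h.lev_A, h.lev_B, h.lev_t]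
    ring
  · rintro (_ | _)
    · simp only [cond]; linarith
    · simp only [cond]; linarith
  · rintro (_ | _)
    · simp only [cond, h.lev_s, h.lev_t]
      have : (G.dist s t : ℝ) ≤ 3 := by exact_mod_cast h.dist_st hb
      linarith
    · simp only [cond, h.lev_A, h.lev_B, dist_one (h.aAB i j)]; norm_num
  · intro z
    rw [hmu1, hmu2]
    simp only [Fintype.sum_bool, cond]
    have e1 : ∀ i, G.Adj (A i) s := fun i => (h.asA i).symm
    have e2 : ∀ i, G.Adj (B i) t := fun i => (h.atB i).symm
    have e3 : ∀ i, ¬ G.Adj (B i) s := fun i h' => h.asB i h'.symm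
    have e4 : ∀ i, ¬ G.Adj (A i) t := fun i h' => h.atA i h'.symm
    have e5 : ∀ i j, G.Adj (B i) (A j) := fun i j => (h.aAB j i).symm
    rcases h.cases z with rfl | ⟨k, rfl⟩ | ⟨k, rfl⟩ | rfl
    · simp [h.sA, h.sB, (h.sA _).symm, (h.sB _).symm, e1, e3, h.st.symm]
    · by_cases hki : k = i
      · subst hki
        simp [h.AA, h.AB, (h.AB _ _).symm, e5, h.sA, h.tA]
      · have hik : ¬ i = k := fun e => hki e.symm
        simp [h.AA, h.AB, (h.AB _ _).symm, e5, h.sA, h.tA, hki, hik, h.aAA]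
    · by_cases hkj : k = j
      · subst hkj
        simp [h.BB, h.AB, (h.AB _ _).symm, h.aAB, h.sB, h.tB]
      · have hjk : ¬ j = k := fun e => hkj e.symm
        simp [h.BB, h.AB, (h.AB _ _).symm, h.aAB, h.sB, h.tB, hkj, hjk, h.aBB]
    · simp [h.tA, h.tB, (h.tA _).symm, (h.tB _).symm, e2, e4, h.st]
  · intro z
    rw [hmu1]
    simp only [Fintype.sum_bool, cond]
    have e1 : ∀ i, G.Adj (A i) s := fun i => (h.asA i).symm
    have hnn : (0 : ℝ) ≤ if z = A i then p else if G.Adj (A i) z then c else 0 := by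
      split_ifs <;> linarith
    rcases h.cases z with rfl | ⟨k, rfl⟩ | ⟨k, rfl⟩ | rfl
    · simp [h.sA, (h.sA _).symm, e1]
    · by_cases hki : k = i
      · subst hki
        simp [h.sA]
        linarith
      · have hik : ¬ i = k := fun e => hki e.symm
        simpa [h.AA, h.sA, hik] using hnn
    · simpa [h.AB, h.sB] using hnn
    · simpa [h.st, (h.tA _).symm] using hnn
  · exact mu_le_one p hp hp1 _

theorem kappa_AA (h : AT4 G b s t A B) (hb : 0 < b) (i j : Fin b) (hij : i ≠ j) :
    kappaLLY G (A i) (A j) = 1 + 1 / (2 * b) := by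
  apply kappaLLY_eq
  intro p hp hp1
  have hb1 : (1 : ℝ) ≤ b := by exact_mod_cast hb
  have hc0 : 0 < (1 - p) / (2 * b) := by apply div_pos <;> linarith
  have hcq : (1 - p) / (2 * b) ≤ (1 - p) / 2 := by
    apply div_le_div_of_nonneg_left <;> linarith
  have hfin : (1 - p) * (1 + 1 / (2 * b)) = (1 - p) + ((1 - p) / (2 * b)) := by
    field_simp
  rw [hfin]
  have hmu1 := h.mu_A p i
  have hmu2 := h.mu_A p j
  generalize (1 - p) / (2 * b) = c at *
  have hji := hij.symm
  have hadj : G.Adj (A i) (A j) := (h.aAA i j).2 hij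
  rw [W1_eq G _ _ (ι := Unit) (fun _ => A i)
    (fun _ => A j) (fun _ => p - c) (fun x => if x = A j then 1 else 0)]
  · simp [h.AA, hij]
    ring
  · apply lip_dist G (h.conn hb)
    intro u v _
    split_ifs <;> norm_num
  · intro _
    linarith
  · intro _
    simp [h.AA, hij, dist_one hadj]
  · intro z
    rw [hmu1, hmu2]
    simp only [Finset.univ_unique, Finset.sum_singleton]
    by_cases hzi : z = A i
    · subst hzi
      simp [h.AA, hij, hji, hadj.symm]
    · by_cases hzj : z = A j
      · subst hzj
        simp [h.AA, hij, hji, hadj]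
      · have e1 : ¬ A i = z := fun e => hzi e.symm
        have e2 : ¬ A j = z := fun e => hzj e.symm
        have e3 : G.Adj (A j) z ↔ G.Adj (A i) z := by
          rcases h.cases z with rfl | ⟨k, rfl⟩ | ⟨k, rfl⟩ | rfl
          · simp [(h.asA _).symm]
          · rw [h.AA] at e1 e2
            simp [h.aAA, e1, e2]
          · simp [h.aAB]
          · simp [G.adj_comm _ z, h.atA]
        simp [hzi, hzj, e1, e2, e3]
  · intro z
    rw [hmu1]
    simp only [Finset.univ_unique, Finset.sum_singleton]
    by_cases hzi : z = A i
    · subst hzi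
      simp
      linarith
    · have e1 : ¬ A i = z := fun e => hzi e.symm
      simp only [hzi, e1, if_false]
      split_ifs <;> linarith
  · exact mu_le_one p hp hp1 _

theorem sharp_iff (h : AT4 G b s t A B) (hb : 0 < b) : BMSharp G ↔ b = 3 := by
  unfold BMSharp
  rw [h.diam_eq hb]
  have hbdd : BddBelow {r : ℝ | ∃ x y, G.Adj x y ∧ r = kappaLLY G x y} := by
    apply Set.Finite.bddBelow
    apply (Set.finite_range (fun xy : V × V => kappaLLY G xy.1 xy.2)).subset
    rintro r ⟨x, y, _, rfl⟩
    exact ⟨(x, y), rfl⟩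
  have hb1 : (1 : ℝ) ≤ b := by exact_mod_cast hb
  have i0 : Fin b := ⟨0, hb⟩
  constructor
  · intro hs
    have k1 := csInf_le hbdd ⟨s, A i0, h.asA i0, rfl⟩
    have k2 := csInf_le hbdd ⟨A i0, B i0, h.aAB i0 i0, rfl⟩
    rw [hs, h.kappa_sA hb] at k1
    rw [hs, h.kappa_AB hb] at k2
    rw [le_div_iff₀ (by linarith)] at k1 k2
    push_cast at k1 k2
    have l1 : (b : ℝ) ≤ 3 := by linarith
    have l2 : (3 : ℝ) ≤ b := by linarith
    exact_mod_cast le_antisymm l1 l2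
  · intro hb3
    apply IsLeast.csInf_eq
    have hbr : (b : ℝ) = 3 := by rw [hb3]; norm_num
    constructor
    · refine ⟨s, A i0, h.asA i0, ?_⟩
      rw [h.kappa_sA hb, hbr]
      norm_num
    · rintro r ⟨x, y, hxy, rfl⟩
      have key : ∀ q : ℝ, (q = (b + 1) / (2 * b) ∨ q = (b - 1) / b ∨ q = 1 + 1 / (2 * b)) →
          2 / ((3 : ℕ) : ℝ) ≤ q := by
        rintro q (rfl | rfl | rfl) <;> rw [hbr] <;> norm_num
      apply key
      rcases h.cases x with rfl | ⟨i, rfl⟩ | ⟨i, rfl⟩ | rfl <;>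
      rcases h.cases y with rfl | ⟨j, rfl⟩ | ⟨j, rfl⟩ | rfl
      · exact absurd hxy (G.loopless.irrefl _)
      · exact Or.inl (h.kappa_sA hb j)
      · exact absurd hxy (h.asB _)
      · exact absurd hxy h.ast
      · rw [kappaLLY_symm]; exact Or.inl (h.kappa_sA hb i)
      · exact Or.inr (Or.inr (h.kappa_AA hb i j ((h.aAA i j).1 hxy)))
      · exact Or.inr (Or.inl (h.kappa_AB hb i j))
      · exact absurd hxy.symm (h.atA _)
      · exact absurd hxy.symm (h.asB _)
      · exact Or.inr (Or.inl (h.rev.kappa_AB hb i j))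
      · exact Or.inr (Or.inr (h.rev.kappa_AA hb i j ((h.aBB i j).1 hxy)))
      · rw [kappaLLY_symm]; exact Or.inl (h.rev.kappa_sA hb i)
      · exact absurd hxy.symm h.ast
      · exact absurd hxy (h.atA _)
      · exact Or.inl (h.rev.kappa_sA hb j)
      · exact absurd hxy (G.loopless.irrefl _)

end AT4

def vS (b : ℕ) : Σ k : Fin 4, Fin (![1, b, b, 1] k) := ⟨0, (0 : Fin 1)⟩
def vT (b : ℕ) : Σ k : Fin 4, Fin (![1, b, b, 1] k) := ⟨3, (0 : Fin 1)⟩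
def vA (b : ℕ) (i : Fin b) : Σ k : Fin 4, Fin (![1, b, b, 1] k) := ⟨1, i⟩
def vB (b : ℕ) (i : Fin b) : Σ k : Fin 4, Fin (![1, b, b, 1] k) := ⟨2, i⟩

theorem vA_inj (b : ℕ) (i j : Fin b) : vA b i = vA b j ↔ i = j := by
  constructor
  · intro h
    have := (Sigma.mk.inj h).2
    exact eq_of_heq this
  · rintro rfl; rfl

theorem vB_inj (b : ℕ) (i j : Fin b) : vB b i = vB b j ↔ i = j := by
  constructor
  · intro h
    have := (Sigma.mk.inj h).2
    exact eq_of_heq this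
  · rintro rfl; rfl

theorem v_ne (b : ℕ) (x y : Σ k : Fin 4, Fin (![1, b, b, 1] k)) (h : x.1 ≠ y.1) : x ≠ y :=
  fun e => h (congrArg Sigma.fst e)

theorem sum_V (b : ℕ) (g : (Σ k : Fin 4, Fin (![1, b, b, 1] k)) → ℕ) :
    ∑ x, g x = g (vS b) + ∑ i, g (vA b i) + ∑ i, g (vB b i) + g (vT b) := by
  rw [Fintype.sum_sigma, Fin.sum_univ_four]
  have h0 : (∑ y : Fin (![1, b, b, 1] 0), g ⟨0, y⟩) = g (vS b) :=
    Fin.sum_univ_one (fun y : Fin 1 => g ⟨0, y⟩)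
  have h3 : (∑ y : Fin (![1, b, b, 1] 3), g ⟨3, y⟩) = g (vT b) :=
    Fin.sum_univ_one (fun y : Fin 1 => g ⟨3, y⟩)
  rw [h0, h3]
  rfl

theorem at4 (b : ℕ) : AT4 (antitree 4 ![1, b, b, 1]) b (vS b) (vT b) (vA b) (vB b) where
  cases := by
    rintro ⟨k, i⟩
    fin_cases k
    · left
      have : ∀ i : Fin 1, (⟨0, i⟩ : Σ k : Fin 4, Fin (![1, b, b, 1] k)) = vS b := by
        intro i; rw [Subsingleton.elim i 0]; rfl
      exact this i
    · right; left; exact ⟨i, rfl⟩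
    · right; right; left; exact ⟨i, rfl⟩
    · right; right; right
      have : ∀ i : Fin 1, (⟨3, i⟩ : Σ k : Fin 4, Fin (![1, b, b, 1] k)) = vT b := by
        intro i; rw [Subsingleton.elim i 0]; rfl
      exact this i
  card P := by
    simp only [Finset.card_filter]
    exact sum_V b _
  st := v_ne b _ _ (by simp [vS, vT])
  sA i := v_ne b _ _ (by simp [vS, vA])
  sB i := v_ne b _ _ (by simp [vS, vB])
  tA i := v_ne b _ _ (by simp [vT, vA])
  tB i := v_ne b _ _ (by simp [vT, vB])
  AB i j := v_ne b _ _ (by simp [vB, vA])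
  AA := vA_inj b
  BB := vB_inj b
  asA i := ⟨v_ne b _ _ (by simp [vS, vA]), by simp [vS, vA]⟩
  atB i := ⟨v_ne b _ _ (by simp [vT, vB]), by simp [vT, vB]⟩
  asB i h := by have := h.2; simp [vS, vB] at this
  atA i h := by have := h.2; simp [vT, vA] at this
  ast h := by have := h.2; simp [vS, vT] at this
  aAB i j := ⟨v_ne b _ _ (by simp [vB, vA]), by simp [vA, vB]⟩
  aAA i j := ⟨fun h e => h.1 ((vA_inj b i j).2 e),
    fun h => ⟨fun e => h ((vA_inj b i j).1 e), Or.inl rfl⟩⟩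
  aBB i j := ⟨fun h e => h.1 ((vB_inj b i j).2 e),
    fun h => ⟨fun e => h ((vB_inj b i j).1 e), Or.inl rfl⟩⟩

theorem stmt16 (b : ℕ) (hb : 0 < b) :
    BMSharp (antitree 4 ![1, b, b, 1]) ↔ b = 3 :=
  (at4 b).sharp_iff hb
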